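/- If u ∈ ℚ⟨a,b⟩ is an eigenvector of the Tchebyshev transform of the second kind U with eigenvalue λ, then (a−b)·u is also an eigenvector of U with the same eigenvalue λ. -/

import Mathlib

open scoped TensorProduct

noncomputable section

namespace Tcheb

/-! ### The algebra `R⟨a,b⟩` of ab-polynomials -/

/-- Words in the two noncommuting letters `a` (encoded `true`) and `b` (encoded `false`). -/
abbrev ABWord : Type := FreeMonoid Bool

/-- The ring `R⟨a,b⟩` of polynomials in two noncommuting variables `a` and `b`. -/
abbrev AB (R : Type) [CommRing R] : Type := MonoidAlgebra R ABWord

variable (R : Type) [CommRing R]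

/-- The ab-monomial corresponding to a word. -/
def word (l : List Bool) : AB R := MonoidAlgebra.of R ABWord (FreeMonoid.ofList l)

/-- The variable `a`. -/
def av : AB R := word R [true]
/-- The variable `b`. -/
def bv : AB R := word R [false]
/-- `c = a + b`. -/
def cv : AB R := av R + bv R
/-- `d = ab + ba`. -/
def dv : AB R := av R * bv R + bv R * av R
/-- `a - b`. -/
def ev : AB R := av R - bv R

/-- The linear map defined by prescribing values on the basis of ab-monomials. -/
def onBasis {M : Type} [AddCommMonoid M] [Module R M] (f : List Bool → M) :
    AB R →ₗ[R] M :=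
  (Finsupp.lift M R ABWord fun w => f (FreeMonoid.toList w)) ∘ₗ
    (MonoidAlgebra.coeffLinearEquiv R).toLinearMap

/-- The algebra map `A` with `A(a) = 1`, `A(b) = 0`. -/
def Amap : AB R →ₐ[R] R :=
  MonoidAlgebra.lift R R ABWord (FreeMonoid.lift fun x => if x then (1 : R) else 0)

/-- The coproduct on `R⟨a,b⟩`: on an ab-monomial `u₁ ⋯ u_k` it is
`Σ_{i=1}^k u₁ ⋯ u_{i-1} ⊗ u_{i+1} ⋯ u_k`. -/
def Delta : AB R →ₗ[R] AB R ⊗[R] AB R :=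
  onBasis R fun w => ∑ i ∈ Finset.range w.length,
    word R (w.take i) ⊗ₜ[R] word R (w.drop (i + 1))

/-- The linear map `C(u) = 2·A(u) + Σ_u A(u₍₁₎)·A(u₍₂₎)`. -/
def Cmap : AB R →ₗ[R] R :=
  2 • (Amap R).toLinearMap +
    (LinearMap.mul' R R ∘ₗ
      TensorProduct.map (Amap R).toLinearMap (Amap R).toLinearMap) ∘ₗ Delta R

/-- `κ(u) = A(u)·(a-b)^(deg u)` on homogeneous `u`, extended linearly. -/
def kappa : AB R →ₗ[R] AB R :=
  onBasis R fun w => Amap R (word R w) • ev R ^ w.length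

/-- `ν(u) = C(u)·(a-b)^(deg u)` on homogeneous `u`, extended linearly. -/
def nuMap : AB R →ₗ[R] AB R :=
  onBasis R fun w => Cmap R (word R w) • ev R ^ w.length

end Tcheb

namespace Tcheb

/-- Cutting a word into the list of segments between the (sorted) cut positions. -/
def segments : List Bool → List ℕ → List (List Bool)
  | l, [] => [l]
  | l, i :: rest => l.take i :: segments (l.drop (i + 1)) (rest.map fun j => j - (i + 1))
  termination_by _ cuts => cuts.length
  decreasing_by simp

variable (R : Type) [CommRing R]

/-- For segments `[s₁, …, s_k]` this is `ν(s₁)·b·ν(s₂)·b ⋯ b·ν(s_{k-1})·b·κ(s_k)`. -/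
def chainProd : List (List Bool) → AB R
  | [] => 1
  | [s] => kappa R (word R s)
  | s :: rest => nuMap R (word R s) * bv R * chainProd rest

/-- The Tchebyshev transform (of the first kind) on ab-polynomials:
`T(u) = Σ_{k ≥ 1} Σ_u ν(u₍₁₎)·b·ν(u₍₂₎)·b ⋯ b·ν(u₍ₖ₋₁₎)·b·κ(u₍ₖ₎)`,
where the inner sum is over the `k`-fold coproduct.  On the ab-monomial basis this
is the sum, over all sets of positions of deleted letters, of the corresponding
products over the resulting segments. -/
def Tmap : AB R →ₗ[R] AB R :=
  onBasis R fun w => ∑ S : Finset (Fin w.length),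
    chainProd R (segments w ((S.sort (· ≤ ·)).map Fin.val))

/-- The `ω` map on a word: replace each occurrence of `ab` by `2d` and all
remaining letters by `c`. -/
def omegaWord : List Bool → AB R
  | [] => 1
  | true :: false :: rest => (2 * dv R) * omegaWord rest
  | _ :: rest => cv R * omegaWord rest

/-- The `ω` map of Billera–Ehrenborg–Readdy. -/
def omegaMap : AB R →ₗ[R] AB R := onBasis R fun w => omegaWord R w

/-- The reversal involution `u ↦ u*` of ab-polynomials. -/
def revMap : AB R →ₗ[R] AB R := onBasis R fun w => word R w.reverse

/-- `H*(1) = 0` and `H*(u·a) = H*(u·b) = u`. -/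
def Hstar : AB R →ₗ[R] AB R :=
  onBasis R fun w => if w = [] then 0 else word R w.dropLast

/-- The Tchebyshev transform of the second kind `U(u) = H*(T(u·a))`. -/
def Umap : AB R →ₗ[R] AB R := Hstar R ∘ₗ Tmap R ∘ₗ LinearMap.mulRight R (av R)

/-- `σ(u) = Σ_u κ(u₍₁₎)·b·T(u₍₂₎)`. -/
def sigmaMap : AB R →ₗ[R] AB R :=
  LinearMap.mul' R (AB R) ∘ₗ
    TensorProduct.map (LinearMap.mulRight R (bv R) ∘ₗ kappa R) (Tmap R) ∘ₗ Delta R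

/-! ### Graded posets and the ab-index -/

/-- `rk` is a rank function for a bounded poset: `rk ⊥ = 0` and covers raise rank by one. -/
def IsRankFun (α : Type) [PartialOrder α] [OrderBot α] (rk : α → ℕ) : Prop :=
  rk ⊥ = 0 ∧ ∀ x y : α, x ⋖ y → rk y = rk x + 1

/-- `f` lists the elements of a chain in increasing order with respect to the
strict order relation `lt`. -/
def IsStrictChain {α : Type} (lt : α → α → Prop) {n : ℕ} (f : Fin (n + 1) → α) : Prop :=
  ∀ i j : Fin (n + 1), i < j → lt (f i) (f j)

/-- The weight of a chain `x₀ < x₁ < ⋯ < x_k`: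
`(a-b)^{ρ(x₀,x₁)-1}·b·(a-b)^{ρ(x₁,x₂)-1}·b ⋯ b·(a-b)^{ρ(x_{k-1},x_k)-1}`. -/
def chainWt {α : Type} (rk : α → ℕ) {n : ℕ} (f : Fin (n + 1) → α) : AB R :=
  (List.intersperse (bv R)
    (List.ofFn fun i : Fin n => ev R ^ (rk (f i.succ) - rk (f i.castSucc) - 1))).prod

/-- The ab-index `Ψ` of the graded poset with strict order relation `lt`, rank
function `rk`, minimum `b` and maximum `t`: the sum of the weights of all chains
from `b` to `t`. -/
def PsiRel {α : Type} (lt : α → α → Prop) (rk : α → ℕ) (b t : α) : AB R :=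
  ∑ᶠ (n : ℕ), ∑ᶠ (f : Fin (n + 1) → α)
    (_ : IsStrictChain lt f ∧ f 0 = b ∧ f (Fin.last n) = t), chainWt R rk f

end Tcheb

namespace Tcheb

/-! ### The Tchebyshev transform of a graded poset -/

section TPoset

variable (α : Type) [PartialOrder α] [BoundedOrder α]

/-- The elements `[x,y]` of the Tchebyshev transform: intervals of `P ∪ {-1̂}`,
i.e. pairs `(x,y)` with `x ∈ P ∪ {-1̂}`, `y ∈ P` and `x < y`. -/
def TPel : Type := {p : WithBot α × α // p.1 < (p.2 : WithBot α)}

/-- The underlying set of the Tchebyshev transform `T(P)`: the intervals `[x,y]`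
together with a new maximum element (`none`). -/
def TP : Type := Option (TPel α)

/-- The cover relation of the Tchebyshev transform `T(P)`:
`[x,y] ⋖ [y,w]` and `[x,y] ⋖ [x,w]` whenever `y ⋖ w` in `P`, and `[x,1̂] ⋖ 1̂_{T(P)}`. -/
inductive TPcov : TP α → TP α → Prop
  | up {x : WithBot α} {y w : α} (h1 : x < (y : WithBot α))
      (h2 : (y : WithBot α) < (w : WithBot α)) (hc : y ⋖ w) :
      TPcov (some ⟨(x, y), h1⟩) (some ⟨((y : WithBot α), w), h2⟩)
  | same {x : WithBot α} {y w : α} (h1 : x < (y : WithBot α))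
      (h2 : x < (w : WithBot α)) (hc : y ⋖ w) :
      TPcov (some ⟨(x, y), h1⟩) (some ⟨(x, w), h2⟩)
  | top {x : WithBot α} (h1 : x < ((⊤ : α) : WithBot α)) :
      TPcov (some ⟨(x, (⊤ : α)), h1⟩) none

/-- The strict order relation of `T(P)`, generated by the cover relation. -/
def TPlt : TP α → TP α → Prop := Relation.TransGen (TPcov α)

/-- The order relation of `T(P)`, generated by the cover relation. -/
def TPle : TP α → TP α → Prop := Relation.ReflTransGen (TPcov α)

/-- The minimum element `[-1̂, 0̂]` of `T(P)`. -/
def TPbot : TP α := some ⟨((⊥ : WithBot α), (⊥ : α)), WithBot.bot_lt_coe _⟩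

/-- The maximum element `1̂_{T(P)}` of `T(P)`. -/
def TPtop : TP α := none

/-- The rank function of `T(P)`: `ρ([x,y]) = ρ(y)` and `ρ(1̂_{T(P)}) = ρ(P) + 1`. -/
def TPrk (rk : α → ℕ) : TP α → ℕ
  | some p => rk p.1.2
  | none => rk (⊤ : α) + 1

theorem TPbot_ne_TPtop : TPbot α ≠ TPtop α := by exact Option.some_ne_none _

/-- The map `z : T(P) → P ∪ {2̂}` with `z([x,y]) = y` and `z(1̂_{T(P)}) = 2̂`. -/
def zmap : TP α → WithTop α
  | some p => (p.1.2 : WithTop α)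
  | none => ⊤

/-- The number of elements of the interval `[u,v]` of `P`, for `u, v ∈ P ∪ {2̂}`. -/
def intervalCard (u v : WithTop α) : ℕ :=
  Set.ncard {t : α | u ≤ (t : WithTop α) ∧ (t : WithTop α) ≤ v}

end TPoset

/-! ### The dual diamond product -/

/-- The strict order relation of the dual diamond product
`P ◇* Q = ((P ∖ {1̂}) × (Q ∖ {1̂})) ∪ {1̂}` (with `none` the new maximum), built from
the order relations `leA, ltA` and `leB, ltB` of the two factors. -/
def dsLT {A B : Type} (leA ltA : A → A → Prop) (leB ltB : B → B → Prop) :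
    Option (A × B) → Option (A × B) → Prop
  | some p, some q => (leA p.1 q.1 ∧ leB p.2 q.2) ∧ (ltA p.1 q.1 ∨ ltB p.2 q.2)
  | some _, none => True
  | none, _ => False

/-! ### EL-labelings -/

/-- The list of edge labels along a chain (given as a list of poset elements). -/
def labelsList {α Λ : Type} (lam : α → α → Λ) (l : List α) : List Λ :=
  (l.zip l.tail).map fun p => lam p.1 p.2

/-- `l` is a maximal (saturated) chain of the interval `[x,y]` with respect to the
cover relation `cov`: it runs from `x` to `y` and every step is a cover. -/
def IsMaxChainList {α : Type} (cov : α → α → Prop) (x y : α) (l : List α) : Prop :=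
  l.head? = some x ∧ l.getLast? = some y ∧ l.Chain' cov

/-- An `EL`-labeling of the poset whose cover relation is `cov`, with labels in the
linearly ordered set `(Λ, lle, llt)`: every interval has a unique rising maximal
chain, which moreover is lexicographically least among all maximal chains of the
interval. -/
def IsELLabeling (α Λ : Type) (lle llt : Λ → Λ → Prop)
    (cov : α → α → Prop) (lam : α → α → Λ) : Prop :=
  ∀ x y : α, Relation.ReflTransGen cov x y →
    ∃ l : List α, (IsMaxChainList cov x y l ∧ (labelsList lam l).Chain' lle) ∧
      (∀ l' : List α, IsMaxChainList cov x y l' →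
        (labelsList lam l').Chain' lle → l' = l) ∧
      (∀ l' : List α, IsMaxChainList cov x y l' →
        labelsList lam l = labelsList lam l' ∨
          List.Lex llt (labelsList lam l) (labelsList lam l'))

/-! ### Eulerian posets -/

/-- A graded poset is Eulerian if every nontrivial interval `[x,y]` has the
same number of elements of even rank as of odd rank. -/
def IsEulerian (α : Type) [PartialOrder α] (rk : α → ℕ) : Prop :=
  ∀ x y : α, x < y →
    Set.ncard {z : α | x ≤ z ∧ z ≤ y ∧ Even (rk z)} =
      Set.ncard {z : α | x ≤ z ∧ z ≤ y ∧ ¬ Even (rk z)}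

/-! ### The face lattice of the crosspolytope -/

/-- A face of the `n`-dimensional crosspolytope: a partial sign vector, i.e. the
pair `(S, ε)` of a subset `S ⊆ {1,…,n}` (the set of coordinates where the function
takes a value `some`) together with a sign function `ε` on `S`. -/
def CrossEl (n : ℕ) : Type := Fin n → Option Bool

/-- `(S,ε) ≤ (T,δ)` iff `S ⊆ T` and `δ` restricted to `S` is `ε`. -/
instance (n : ℕ) : PartialOrder (CrossEl n) where
  le f g := ∀ i s, f i = some s → g i = some s
  le_refl f i s h := h
  le_trans f g h fg gh i s hi := gh i s (fg i s hi)
  le_antisymm f g fg gf := by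
    funext i
    cases hf : f i with
    | some s => exact (fg i s hf).symm
    | none =>
      cases hg : g i with
      | some s => exact absurd (gf i s hg) (by simp [hf])
      | none => rfl

/-- The face lattice of the `n`-dimensional crosspolytope: all partial sign
vectors together with a new maximum element. -/
abbrev Cross (n : ℕ) : Type := WithTop (CrossEl n)

/-- The rank function of the face lattice of the crosspolytope:
`ρ(S,ε) = |S|` and the maximum has rank `n + 1`. -/
def crossRk (n : ℕ) : Cross n → ℕ
  | none => n + 1
  | some f => (Finset.univ.filter fun i : Fin n => (f i).isSome).card

/-- The minimal element (the empty face) of the crosspolytope face lattice. -/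
def crossBot (n : ℕ) : Cross n := WithTop.some (fun _ => none)

/-- The maximal element of the crosspolytope face lattice. -/
def crossTop (n : ℕ) : Cross n := ⊤

/-! ### Quasisymmetric functions -/

/-- The monomial quasisymmetric function `M_{(p₁,…,p_k)}`, as a formal power
series in the countably many commuting variables `t₁, t₂, …` (indexed by `ℕ`). -/
def MQ (R : Type) [CommRing R] (ps : List ℕ) : MvPowerSeries ℕ R :=
  fun m => if ((m.support.sort (· ≤ ·)).map fun i => m i) = ps then 1 else 0

/-- The `t`-part of a monomial in the variables `s` (index `none`) and
`t₁, t₂, …` (indices `some i`). -/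
def tpart (m : Option ℕ →₀ ℕ) : ℕ →₀ ℕ :=
  Finsupp.comapDomain some m (Option.some_injective ℕ).injOn

/-- The type B monomial quasisymmetric function `s^p · M_{(p₁,…,p_k)}`, a formal
power series in the variables `s` (index `none`) and `t₁, t₂, …` (indices `some i`). -/
def MB (R : Type) [CommRing R] (p : ℕ) (ps : List ℕ) : MvPowerSeries (Option ℕ) R :=
  fun m => if m none = p ∧
      (((tpart m).support.sort (· ≤ ·)).map fun i => tpart m i) = ps then 1 else 0

/-- The quasisymmetric function `F(P)` of the graded poset with strict order
relation `lt`, rank function `rk`, minimum `b` and maximum `t`: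
`F(P) = Σ_c M_{(ρ(x₀,x₁),…,ρ(x_{k-1},x_k))}` over all chains `c` from `b` to `t`. -/
def FQ (R : Type) [CommRing R] {α : Type} (lt : α → α → Prop) (rk : α → ℕ)
    (b t : α) : MvPowerSeries ℕ R :=
  ∑ᶠ (n : ℕ), ∑ᶠ (f : Fin (n + 1) → α)
    (_ : IsStrictChain lt f ∧ f 0 = b ∧ f (Fin.last n) = t),
    MQ R (List.ofFn fun i : Fin n => rk (f i.succ) - rk (f i.castSucc))

/-- The type B quasisymmetric function `F_B(P) = Σ_{0̂ < x ≤ 1̂} s^{ρ(x)-1}·F([x,1̂])`,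
written as a sum over all chains `0̂ < x₀ < x₁ < ⋯ < x_k = 1̂` of
`s^{ρ(x₀)-1}·M_{(ρ(x₀,x₁),…,ρ(x_{k-1},x_k))}`. -/
def FB (R : Type) [CommRing R] {α : Type} (lt : α → α → Prop) (rk : α → ℕ)
    (b t : α) : MvPowerSeries (Option ℕ) R :=
  ∑ᶠ (n : ℕ), ∑ᶠ (f : Fin (n + 1) → α)
    (_ : IsStrictChain lt f ∧ lt b (f 0) ∧ f (Fin.last n) = t),
    MB R (rk (f 0) - 1) (List.ofFn fun i : Fin n => rk (f i.succ) - rk (f i.castSucc))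

/-! ### Characters and the chain maps -/

/-- A character on `k⟨a,b⟩`: a linear functional which is multiplicative with
respect to Cartesian products of graded posets (of rank at least 1). -/
def IsCharacter (k : Type) [Field k] (G : AB k →ₗ[k] k) : Prop :=
  ∀ (α β : Type) [Fintype α] [Fintype β] [PartialOrder α] [PartialOrder β]
    [BoundedOrder α] [BoundedOrder β], ∀ (rkα : α → ℕ) (rkβ : β → ℕ),
    IsRankFun α rkα → IsRankFun β rkβ → 1 ≤ rkα ⊤ → 1 ≤ rkβ ⊤ →
    G (PsiRel k (· < ·) (fun p : α × β => rkα p.1 + rkβ p.2)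
        ((⊥ : α), (⊥ : β)) ((⊤ : α), (⊤ : β))) =
      G (PsiRel k (· < ·) rkα ⊥ ⊤) * G (PsiRel k (· < ·) rkβ ⊥ ⊤)

/-- The quasisymmetric function image `g̃F(P)` of the chain map of the second kind:
`Σ_c G(Ψ([x₀,x₁])) ⋯ G(Ψ([x_{k-1},x_k])) · M_{(ρ(x₀,x₁),…,ρ(x_{k-1},x_k))}`,
summed over all chains `c = {b = x₀ < ⋯ < x_k = t}`. -/
def gtF (k : Type) [Field k] (G : AB k →ₗ[k] k) {α : Type} (lt : α → α → Prop)
    (rk : α → ℕ) (b t : α) : MvPowerSeries ℕ k :=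
  ∑ᶠ (n : ℕ), ∑ᶠ (f : Fin (n + 1) → α)
    (_ : IsStrictChain lt f ∧ f 0 = b ∧ f (Fin.last n) = t),
    (∏ i : Fin n, G (PsiRel k lt rk (f i.castSucc) (f i.succ))) •
      MQ k (List.ofFn fun i : Fin n => rk (f i.succ) - rk (f i.castSucc))

/-- The type B quasisymmetric function image `gF_B(P) = Σ_{0̂ < x ≤ 1̂}
s^{ρ(x)-1}·g̃F([x,1̂])` of the chain map of the first kind, written as a sum over
all chains `0̂ < x₀ < ⋯ < x_k = 1̂`. -/
def gFB (k : Type) [Field k] (G : AB k →ₗ[k] k) {α : Type} (lt : α → α → Prop)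
    (rk : α → ℕ) (b t : α) : MvPowerSeries (Option ℕ) k :=
  ∑ᶠ (n : ℕ), ∑ᶠ (f : Fin (n + 1) → α)
    (_ : IsStrictChain lt f ∧ lt b (f 0) ∧ f (Fin.last n) = t),
    (∏ i : Fin n, G (PsiRel k lt rk (f i.castSucc) (f i.succ))) •
      MB k (rk (f 0) - 1) (List.ofFn fun i : Fin n => rk (f i.succ) - rk (f i.castSucc))

/-- The space of homogeneous ab-polynomials of degree `n`. -/
def ABhomog (k : Type) [Field k] (n : ℕ) : Submodule k (AB k) :=
  Submodule.span k {x : AB k | ∃ w : List Bool, w.length = n ∧ x = word k w}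

section EMul

/-!
Every map in the definition of `U` is compatible with left multiplication by `e = a - b`. Since
`Δ(a) = Δ(b)`, the coproduct satisfies `Δ(e·u) = (e ⊗ 1)·Δ(u)`; as `A(e) = 1`, both functionals
`A` and `C` are unchanged when `u` is replaced by `e·u`, so `κ` and `ν` commute with left
multiplication by `e`. In `T`, deleting the first letter does not see which letter it was, so
these terms cancel in `T(e·u)`, and in each remaining term `e` hits only the first factor. Finally
`H*` acts at the right end of a word, and `e·u ≠ 0` because `e` is left cancellable.
-/

variable {R : Type} [CommRing R] {M : Type} [AddCommGroup M] [Module R M]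

theorem word_cons (x : Bool) (l : List Bool) : word R (x :: l) = word R [x] * word R l :=
  map_mul (MonoidAlgebra.of R ABWord) (FreeMonoid.of x) (FreeMonoid.ofList l)

theorem word_nil : word R [] = 1 :=
  map_one (MonoidAlgebra.of R ABWord)

theorem ev_mul_word (l : List Bool) :
    ev R * word R l = word R (true :: l) - word R (false :: l) := by
  rw [word_cons true, word_cons false, ev, av, bv, sub_mul]

theorem onBasis_word (f : List Bool → M) (l : List Bool) : onBasis R f (word R l) = f l := by
  simp [onBasis, word]

theorem map_ev_mul_of_word {f g : AB R →ₗ[R] M}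
    (h : ∀ l, f (word R (true :: l)) - f (word R (false :: l)) = g (word R l)) (u : AB R) :
    f (ev R * u) = g u := by
  induction u using MonoidAlgebra.induction_on with
  | of l =>
    change f (ev R * word R l.toList) = g (word R l.toList)
    rw [ev_mul_word, map_sub, h]
  | add u v hu hv => rw [mul_add, map_add, map_add, hu, hv]
  | smul r u hu => rw [mul_smul_comm, map_smul, map_smul, hu]

theorem isLeftRegular_ev : IsLeftRegular (ev R) := by
  -- `stripA` sends `a·w` to `w` and all other words to `0`; it is a left inverse of `u ↦ e·u`.
  let stripA : AB R →ₗ[R] AB R :=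
    onBasis R fun w => if w.head? = some true then word R w.tail else 0
  have stripA_ev_mul (u : AB R) : stripA (ev R * u) = u :=
    map_ev_mul_of_word (f := stripA) (g := LinearMap.id) (fun l => by simp [stripA, onBasis_word]) u
  exact Function.LeftInverse.injective stripA_ev_mul

theorem Amap_av : Amap R (av R) = 1 := by
  simp [Amap, av, word]

theorem Amap_bv : Amap R (bv R) = 0 := by
  simp [Amap, bv, word]

theorem Amap_ev_mul (u : AB R) : Amap R (ev R * u) = Amap R u := by
  rw [map_mul, ev, map_sub, Amap_av, Amap_bv, sub_zero, one_mul]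

theorem Delta_word_cons (x : Bool) (l : List Bool) :
    Delta R (word R (x :: l)) =
      1 ⊗ₜ[R] word R l + (word R [x] ⊗ₜ[R] 1) * Delta R (word R l) := by
  simp only [Delta, onBasis_word, List.length_cons, Finset.sum_range_succ', List.take_succ_cons,
    List.drop_succ_cons, List.take_zero, List.drop_zero, word_nil, word_cons x (List.take _ _),
    Finset.mul_sum, Algebra.TensorProduct.tmul_mul_tmul, one_mul]
  exact add_comm _ _

theorem Delta_ev_mul (u : AB R) : Delta R (ev R * u) = (ev R ⊗ₜ[R] 1) * Delta R u := by
  refine map_ev_mul_of_word (g := LinearMap.mulLeft R (ev R ⊗ₜ[R] 1) ∘ₗ Delta R) (fun l => ?_) u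
  rw [Delta_word_cons, Delta_word_cons, add_sub_add_left_eq_sub, ← sub_mul,
    ← TensorProduct.sub_tmul]
  rfl

theorem Cmap_ev_mul (u : AB R) : Cmap R (ev R * u) = Cmap R u := by
  have mul_map_ev_tmul_mul (t : AB R ⊗[R] AB R) :
      LinearMap.mul' R R (TensorProduct.map (Amap R).toLinearMap (Amap R).toLinearMap
        ((ev R ⊗ₜ[R] 1) * t)) =
      LinearMap.mul' R R (TensorProduct.map (Amap R).toLinearMap (Amap R).toLinearMap t) := by
    induction t using TensorProduct.induction_on with
    | zero => rw [mul_zero]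
    | tmul v w => simp [Amap_ev_mul]
    | add s t hs ht => rw [mul_add, map_add, map_add, map_add, map_add, hs, ht]
  simp only [Cmap, LinearMap.add_apply, LinearMap.smul_apply, LinearMap.comp_apply,
    AlgHom.toLinearMap_apply, Amap_ev_mul, Delta_ev_mul, mul_map_ev_tmul_mul]

theorem onBasis_smul_ev_pow_ev_mul (φ : AB R →ₗ[R] R) (hφ : ∀ u, φ (ev R * u) = φ u)
    (u : AB R) :
    onBasis R (fun w => φ (word R w) • ev R ^ w.length) (ev R * u) =
      ev R * onBasis R (fun w => φ (word R w) • ev R ^ w.length) u := by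
  refine map_ev_mul_of_word (g := LinearMap.mulLeft R (ev R) ∘ₗ onBasis R _) (fun l => ?_) u
  rw [LinearMap.comp_apply, LinearMap.mulLeft_apply]
  simp only [onBasis_word, List.length_cons]
  rw [← sub_smul, ← map_sub, ← ev_mul_word, hφ, pow_succ', mul_smul_comm]

theorem kappa_ev_mul (u : AB R) : kappa R (ev R * u) = ev R * kappa R u :=
  onBasis_smul_ev_pow_ev_mul (Amap R).toLinearMap Amap_ev_mul u

theorem nuMap_ev_mul (u : AB R) : nuMap R (ev R * u) = ev R * nuMap R u :=
  onBasis_smul_ev_pow_ev_mul (Cmap R) Cmap_ev_mul u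

theorem segments_ne_nil (l : List Bool) (c : List ℕ) : segments l c ≠ [] := by
  cases c <;> simp [segments]

theorem segments_cons_zero_cons (x : Bool) (l : List Bool) (c : List ℕ) :
    segments (x :: l) (0 :: c.map (· + 1)) = [] :: segments l c := by
  simp [segments, Function.comp_def]

theorem segments_cons_map_succ (x : Bool) (l : List Bool) (c : List ℕ) :
    segments (x :: l) (c.map (· + 1)) = (segments l c).modifyHead (x :: ·) := by
  cases c <;> simp [segments, Function.comp_def]

theorem chainProd_cons (s : List Bool) {ss : List (List Bool)} (hss : ss ≠ []) :
    chainProd R (s :: ss) = nuMap R (word R s) * bv R * chainProd R ss := by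
  rw [chainProd]
  exact hss

theorem chainProd_modifyHead_cons_sub {ss : List (List Bool)} (hss : ss ≠ []) :
    chainProd R (ss.modifyHead (true :: ·)) - chainProd R (ss.modifyHead (false :: ·)) =
      ev R * chainProd R ss := by
  match ss with
  | [s] => simp only [List.modifyHead_cons, chainProd, ← map_sub, ← ev_mul_word, kappa_ev_mul]
  | s :: t :: ss =>
    simp only [List.modifyHead_cons, chainProd_cons _ (List.cons_ne_nil t ss), ← sub_mul,
      ← map_sub, ← ev_mul_word, nuMap_ev_mul, mul_assoc]

theorem sum_finset_fin_succ {n : ℕ} {N : Type*} [AddCommMonoid N] (f : Finset (Fin (n + 1)) → N) :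
    ∑ S, f S = ∑ S : Finset (Fin n), f (S.map (Fin.succEmb n)) +
      ∑ S : Finset (Fin n), f (insert 0 (S.map (Fin.succEmb n))) := by
  have powerset_map_succ :
      (Finset.univ.map (Fin.succEmb n)).powerset =
        Finset.univ.map (Finset.mapEmbedding (Fin.succEmb n)).toEmbedding := by
    ext S
    simp [Finset.subset_map_iff, eq_comm]
  have univ_eq : (Finset.univ : Finset (Fin (n + 1))) =
      insert 0 (Finset.univ.map (Fin.succEmb n)) := by
    rw [Fin.univ_succ, Finset.cons_eq_insert]
    rfl
  rw [← Finset.powerset_univ, univ_eq, Finset.sum_powerset_insert (by simp [Fin.succ_ne_zero]),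
    powerset_map_succ, Finset.sum_map, Finset.sum_map]
  rfl

theorem map_val_sort_map_succEmb {n : ℕ} (S : Finset (Fin n)) :
    ((S.map (Fin.succEmb n)).sort (· ≤ ·)).map Fin.val =
      ((S.sort (· ≤ ·)).map Fin.val).map (· + 1) := by
  have sort_map : (S.map (Fin.succEmb n)).sort (· ≤ ·) = (S.sort (· ≤ ·)).map (Fin.succEmb n) :=
    ((Fin.strictMono_succ.strictMonoOn _).map_finsetSort (f := Fin.succEmb n)).symm
  simp [sort_map, Function.comp_def]

theorem map_val_sort_insert_zero {n : ℕ} (S : Finset (Fin n)) :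
    ((insert 0 (S.map (Fin.succEmb n))).sort (· ≤ ·)).map Fin.val =
      0 :: ((S.sort (· ≤ ·)).map Fin.val).map (· + 1) := by
  rw [Finset.sort_insert _ (fun _ _ => Fin.zero_le _) (by simp [Fin.succ_ne_zero]), List.map_cons,
    map_val_sort_map_succEmb, Fin.val_zero]

/-- The two summands collect the terms of `T` that keep, respectively delete, the first letter. -/
theorem Tmap_word_cons (x : Bool) (l : List Bool) :
    Tmap R (word R (x :: l)) =
      ∑ S : Finset (Fin l.length),
        chainProd R ((segments l ((S.sort (· ≤ ·)).map Fin.val)).modifyHead (x :: ·)) +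
      nuMap R 1 * bv R * Tmap R (word R l) := by
  have Tmap_word_eq_sum : Tmap R (word R (x :: l)) = ∑ S : Finset (Fin (l.length + 1)),
      chainProd R (segments (x :: l) ((S.sort (· ≤ ·)).map Fin.val)) :=
    onBasis_word _ _
  rw [Tmap_word_eq_sum, sum_finset_fin_succ, Tmap, onBasis_word]
  simp only [map_val_sort_map_succEmb, map_val_sort_insert_zero, segments_cons_map_succ,
    segments_cons_zero_cons, chainProd_cons _ (segments_ne_nil _ _), word_nil, Finset.mul_sum]

theorem Tmap_ev_mul (u : AB R) : Tmap R (ev R * u) = ev R * Tmap R u := by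
  refine map_ev_mul_of_word (g := LinearMap.mulLeft R (ev R) ∘ₗ Tmap R) (fun l => ?_) u
  rw [Tmap_word_cons, Tmap_word_cons, add_sub_add_right_eq_sub, ← Finset.sum_sub_distrib]
  simp only [chainProd_modifyHead_cons_sub (segments_ne_nil _ _), LinearMap.comp_apply,
    LinearMap.mulLeft_apply, Tmap, onBasis_word, Finset.mul_sum]

theorem Hstar_ev_mul (u : AB R) : Hstar R (ev R * u) = ev R * Hstar R u := by
  refine map_ev_mul_of_word (g := LinearMap.mulLeft R (ev R) ∘ₗ Hstar R) (fun l => ?_) u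
  cases l <;> simp [Hstar, onBasis_word, ev_mul_word]

theorem Umap_ev_mul (u : AB R) : Umap R (ev R * u) = ev R * Umap R u := by
  simp only [Umap, LinearMap.comp_apply, LinearMap.mulRight_apply, mul_assoc, Tmap_ev_mul,
    Hstar_ev_mul]

theorem U_eigenvector_e_mul_general (u : AB R) (lam : R) (hu : u ≠ 0)
    (h : Umap R u = lam • u) :
    ev R * u ≠ 0 ∧ Umap R (ev R * u) = lam • (ev R * u) := by
  refine ⟨?_, ?_⟩
  · rwa [Ne, isLeftRegular_ev.mul_left_eq_zero_iff]
  · rw [Umap_ev_mul, h, mul_smul_comm]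

end EMul

theorem U_eigenvector_e_mul (u : AB ℚ) (lam : ℚ) (hu : u ≠ 0)
    (h : Umap ℚ u = lam • u) :
    ev ℚ * u ≠ 0 ∧ Umap ℚ (ev ℚ * u) = lam • (ev ℚ * u) :=
  U_eigenvector_e_mul_general u lam hu h

end Tcheb
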